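/- Let n ∈ ℝ³ be a unit vector and define the vector field F : ℝ³ → ℝ³ by F(x) = (1/(4π)) · (1 + erf(⟨x, n⟩/√2)) · n, where erf is the Gaussian error function. Then F is differentiable everywhere and its divergence satisfies div F(x) = (2π)^{-3/2} exp(-½ ⟨x, n⟩²) for all x ∈ ℝ³. -/

import Mathlib

/-! The field is a function of the single linear coordinate `⟪x, n⟫` times the constant vector `n`,
so its derivative at `x` is a multiple of the rank-one map `v ↦ ⟪v, n⟫ n`, whose trace is
`‖n‖² = 1`. The multiple is `(1 / 4π) (2 / √π) (1 / √2) exp (-⟪x, n⟫² / 2)` by the fundamental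
theorem of calculus and the chain rule, and the constants combine to `(2π)^(-3/2)`. -/

open MeasureTheory Real RealInnerProductSpace intervalIntegral

/-- The Gaussian error function `erf t = (2/√π) ∫₀ᵗ exp (-s²) ds`. -/
noncomputable def erf (t : ℝ) : ℝ :=
  (2 / Real.sqrt π) * ∫ s in (0 : ℝ)..t, Real.exp (-s ^ 2)

/-- The fundamental theorem of calculus applied to the error function. -/
lemma hasDerivAt_erf (t : ℝ) :
    HasDerivAt erf (2 / Real.sqrt π * Real.exp (-t ^ 2)) t := by
  have hc : Continuous fun s : ℝ => Real.exp (-s ^ 2) := by fun_prop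
  exact (hc.integral_hasStrictDerivAt 0 t).hasDerivAt.const_mul _

/-- The Fréchet derivative of the field is a scalar multiple of `v ↦ ⟪v, n⟫ n`. -/
lemma hasFDerivAt_erf_field (n x : EuclideanSpace ℝ (Fin 3)) :
    HasFDerivAt (fun x => (1 / (4 * π) * (1 + erf (⟪x, n⟫ / Real.sqrt 2))) • n)
      ((1 / (4 * π) * (2 / Real.sqrt π * Real.exp (-(⟪x, n⟫ / Real.sqrt 2) ^ 2) / Real.sqrt 2)) •
        InnerProductSpace.rankOne ℝ n n) x := by
  have h1 : HasFDerivAt (fun y : EuclideanSpace ℝ (Fin 3) => ⟪y, n⟫) (innerSL ℝ n) x := by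
    refine (innerSL ℝ n).hasFDerivAt.congr_of_eventuallyEq (.of_forall fun y => ?_)
    exact real_inner_comm n y
  have h2 : HasDerivAt
      (fun s : ℝ => 1 / (4 * π) * (1 + erf (s / Real.sqrt 2)))
      (1 / (4 * π) * (2 / Real.sqrt π * Real.exp (-(⟪x, n⟫ / Real.sqrt 2) ^ 2) * (1 / Real.sqrt 2)))
      ⟪x, n⟫ :=
    (((hasDerivAt_erf _).comp _ ((hasDerivAt_id _).div_const _)).const_add 1).const_mul _
  refine ((h2.comp_hasFDerivAt x h1).smul_const n).congr_fderiv ?_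
  ext v
  simp [InnerProductSpace.rankOne_apply]
  ring

/-- The normalizing constant `(1 / 4π) (2 / √π) / √2` is that of the Gaussian on ℝ³. -/
lemma erf_field_constant :
    1 / (4 * π) * (2 / Real.sqrt π / Real.sqrt 2) = (2 * π) ^ (-(3 : ℝ) / 2) := by
  have hp : 0 < 2 * π := by positivity
  have h : (2 * π) ^ (-(3 : ℝ) / 2) = (2 * π * Real.sqrt (2 * π))⁻¹ := by
    rw [show -(3 : ℝ) / 2 = -(1 + 1 / 2) by norm_num, Real.rpow_neg hp.le, Real.rpow_add hp,
      Real.rpow_one, Real.sqrt_eq_rpow]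
  rw [h, Real.sqrt_mul (by norm_num)]
  field_simp
  norm_num

/-- For a unit vector `n` in ℝ³, the vector field
`F x = (1/(4π)) (1 + erf (⟨x, n⟩ / √2)) n` is differentiable everywhere and
its divergence (the trace of its Fréchet derivative) equals
`(2π)^(-3/2) exp (-⟨x, n⟩² / 2)`. -/
theorem divergence_of_erf_field
    (n : EuclideanSpace ℝ (Fin 3)) (hn : ‖n‖ = 1)
    (F : EuclideanSpace ℝ (Fin 3) → EuclideanSpace ℝ (Fin 3))
    (hF : F = fun x => (1 / (4 * π) * (1 + erf (⟪x, n⟫ / Real.sqrt 2))) • n) :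
    Differentiable ℝ F ∧
      ∀ x, LinearMap.trace ℝ (EuclideanSpace ℝ (Fin 3))
            (fderiv ℝ F x : EuclideanSpace ℝ (Fin 3) →ₗ[ℝ] EuclideanSpace ℝ (Fin 3)) =
          (2 * π) ^ (-(3 : ℝ) / 2) * Real.exp (-(⟪x, n⟫) ^ 2 / 2) := by
  subst hF
  refine ⟨fun x => (hasFDerivAt_erf_field n x).differentiableAt, fun x => ?_⟩
  rw [(hasFDerivAt_erf_field n x).fderiv, ContinuousLinearMap.toLinearMap_smul, map_smul,
    InnerProductSpace.trace_rankOne, real_inner_self_eq_norm_sq, hn, ← erf_field_constant,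
    div_pow, Real.sq_sqrt (by norm_num), ← neg_div]
  simp only [smul_eq_mul]
  ring
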